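/- Let n ≥ m ≥ 2, u, v ∈ A*, a ∈ alph(u) = alph(v), and let u = u_- a u_+ and v = v_- a v_+ be a-left factorizations. If u ⊳_{m,n} v, then u_- ⊳_{m,n-1} v_- (and u_- ⊳_{m-1,n-1} v_- if n = m). If u ⊲_{m,n} v, then u_+ ⊲_{m,n-1} v_+ (and u_+ ⊲_{m-1,n-1} v_+ if n = m). Dually, for the a-right factorizations u = u'_- a u'_+ and v = v'_- a v'_+: if u ⊲_{m,n} v then u'_+ ⊲_{m,n-1} v'_+ (u'_+ ⊲_{m-1,n-1} v'_+ if n = m), and if u ⊳_{m,n} v then u'_- ⊳_{m,n-1} v'_- (u'_- ⊳_{m-1,n-1} v'_- if n = m). -/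

import Mathlib

namespace RankerPaper

variable {A : Type*} [DecidableEq A]

/-- Letters of rankers: `X a` ("next `a` to the right") and `Y a` ("next `a` to the left"). -/
inductive RLetter (A : Type*) where
  | X : A → RLetter A
  | Y : A → RLetter A
  deriving DecidableEq

/-- Least `a`-position of `u` strictly greater than `q` (positions are 1-indexed). -/
def nextOcc (u : List A) (a : A) (q : ℕ) : Option ℕ :=
  ((List.range (u.length + 2)).filter (fun i => decide (q < i ∧ u[i-1]? = some a))).head?

/-- Greatest `a`-position of `u` strictly less than `q` (positions are 1-indexed). -/
def prevOcc (u : List A) (a : A) (q : ℕ) : Option ℕ :=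
  ((List.range (u.length + 2)).filter
    (fun i => decide (1 ≤ i ∧ i < q ∧ u[i-1]? = some a))).getLast?

/-- One evaluation step of a ranker letter from position `q`. -/
def stepR (u : List A) : RLetter A → ℕ → Option ℕ
  | .X a, q => nextOcc u a q
  | .Y a, q => prevOcc u a q

/-- Evaluation of a ranker from position `q`, processing letters left to right. -/
def evalFrom (u : List A) : List (RLetter A) → ℕ → Option ℕ
  | [], q => some q
  | z :: r, q => (stepR u z q).bind (evalFrom u r)

/-- Starting position: `0` for an `X`-letter, `|u|+1` for a `Y`-letter. -/
def startPos (u : List A) : RLetter A → ℕ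
  | .X _ => 0
  | .Y _ => u.length + 1

/-- The position `r(u)` defined by the ranker `r` on `u` (`none` if undefined;
empty rankers are considered undefined, rankers being nonempty words). -/
def evalR (u : List A) (r : List (RLetter A)) : Option ℕ :=
  match r with
  | [] => none
  | z :: t => evalFrom u (z :: t) (startPos u z)

/-- `r` is defined on `u`. -/
def Defined (u : List A) (r : List (RLetter A)) : Prop := (evalR u r).isSome

/-- The position `r(u)` (defaulting to `0` when undefined). -/
def pos (u : List A) (r : List (RLetter A)) : ℕ := (evalR u r).getD 0

/-- Do two ranker letters have the same direction? -/
def sameDir : RLetter A → RLetter A → Bool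
  | .X _, .X _ => true
  | .Y _, .Y _ => true
  | _, _ => false

/-- Number of (alternating) blocks of a ranker. -/
def numBlocks : List (RLetter A) → ℕ
  | [] => 0
  | [_] => 1
  | z :: w :: t => (if sameDir z w then 0 else 1) + numBlocks (w :: t)

def startsX (r : List (RLetter A)) : Prop := ∃ a t, r = RLetter.X a :: t
def startsY (r : List (RLetter A)) : Prop := ∃ a t, r = RLetter.Y a :: t
def endsX (r : List (RLetter A)) : Prop := ∃ a, r.getLast? = some (RLetter.X a)
def endsY (r : List (RLetter A)) : Prop := ∃ a, r.getLast? = some (RLetter.Y a)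

/-- `R^X_{m,n}`: rankers with exactly `m` blocks, depth `n`, starting with an `X`-block. -/
def RX (m n : ℕ) (r : List (RLetter A)) : Prop :=
  numBlocks r = m ∧ r.length = n ∧ startsX r

/-- `R^Y_{m,n}`: rankers with exactly `m` blocks, depth `n`, starting with a `Y`-block. -/
def RY (m n : ℕ) (r : List (RLetter A)) : Prop :=
  numBlocks r = m ∧ r.length = n ∧ startsY r

/-- `uR^X_{m,n}`. -/
def uRX (m n : ℕ) (r : List (RLetter A)) : Prop :=
  (∃ m' n', m' ≤ m ∧ n' ≤ n ∧ RX m' n' r) ∨ (∃ m' n', m' < m ∧ n' < n ∧ RY m' n' r)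

/-- `uR^Y_{m,n}`. -/
def uRY (m n : ℕ) (r : List (RLetter A)) : Prop :=
  (∃ m' n', m' ≤ m ∧ n' ≤ n ∧ RY m' n' r) ∨ (∃ m' n', m' < m ∧ n' < n ∧ RX m' n' r)

/-- `uR_{m,n} = uR^X_{m,n} ∪ uR^Y_{m,n}`. -/
def uR (m n : ℕ) (r : List (RLetter A)) : Prop := uRX m n r ∨ uRY m n r

/-- `uR^X_m = ∪_{n ≥ m} uR^X_{m,n}`. -/
def uRXm (m : ℕ) (r : List (RLetter A)) : Prop := ∃ n, m ≤ n ∧ uRX m n r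

/-- `uR^Y_m = ∪_{n ≥ m} uR^Y_{m,n}`. -/
def uRYm (m : ℕ) (r : List (RLetter A)) : Prop := ∃ n, m ≤ n ∧ uRY m n r

/-- `r = Z₁ ⋯ Z_n` is condensed on `u`: it is defined on `u` and there is a chain of
open intervals `(0;|u|+1) = (i₀;j₀) ⊃ (i₁;j₁) ⊃ ⋯ ⊃ (i_{n-1};j_{n-1}) ∋ r(u)`
updated according to the pairs `Z_ℓ Z_{ℓ+1}`. -/
def Condensed (u : List A) (r : List (RLetter A)) : Prop :=
  ∃ (p : ℕ) (i j : ℕ → ℕ),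
    evalR u r = some p ∧
    i 0 = 0 ∧ j 0 = u.length + 1 ∧
    (∀ ℓ a b, 1 ≤ ℓ → r[ℓ-1]? = some (RLetter.X a) → r[ℓ]? = some (RLetter.X b) →
        nextOcc u a (i (ℓ-1)) = some (i ℓ) ∧ j ℓ = j (ℓ-1)) ∧
    (∀ ℓ a b, 1 ≤ ℓ → r[ℓ-1]? = some (RLetter.Y a) → r[ℓ]? = some (RLetter.Y b) →
        i ℓ = i (ℓ-1) ∧ prevOcc u a (j (ℓ-1)) = some (j ℓ)) ∧
    (∀ ℓ a b, 1 ≤ ℓ → r[ℓ-1]? = some (RLetter.X a) → r[ℓ]? = some (RLetter.Y b) →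
        i ℓ = i (ℓ-1) ∧ nextOcc u a (i (ℓ-1)) = some (j ℓ)) ∧
    (∀ ℓ a b, 1 ≤ ℓ → r[ℓ-1]? = some (RLetter.Y a) → r[ℓ]? = some (RLetter.X b) →
        prevOcc u a (j (ℓ-1)) = some (i ℓ) ∧ j ℓ = j (ℓ-1)) ∧
    (∀ ℓ, 1 ≤ ℓ → ℓ < r.length →
        i (ℓ-1) ≤ i ℓ ∧ j ℓ ≤ j (ℓ-1) ∧ (i (ℓ-1) < i ℓ ∨ j ℓ < j (ℓ-1))) ∧
    i (r.length - 1) < p ∧ p < j (r.length - 1)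

/-- `u` and `v` agree on rankers from the set `R`. -/
def AgreeDef (R : List (RLetter A) → Prop) (u v : List A) : Prop :=
  ∀ r, R r → (Defined u r ↔ Defined v r)

/-- `u` and `v` agree on condensed rankers from the set `R`. -/
def AgreeCond (R : List (RLetter A) → Prop) (u v : List A) : Prop :=
  ∀ r, R r → (Condensed u r ↔ Condensed v r)

/-- `u ⊳_{m,n} v`. -/
def trir (m n : ℕ) (u v : List A) : Prop := AgreeCond (uRX m n) u v

/-- `u ⊲_{m,n} v`. -/
def tril (m n : ℕ) (u v : List A) : Prop := AgreeCond (uRY m n) u v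

/-- The alphabet (set of letters) of a word. -/
def alph (u : List A) : Finset A := u.toFinset

/-- Condition (WI 1). -/
def WI1 (m n : ℕ) (u v : List A) : Prop := AgreeDef (uR m n) u v

/-- Condition (WI 2). -/
def WI2 (m n : ℕ) (u v : List A) : Prop :=
  ∀ r r', uR m n r → uR (m-1) (n-1) r' →
    Defined u r → Defined v r → Defined u r' → Defined v r' →
    compare (pos u r) (pos u r') = compare (pos v r) (pos v r')

/-- Condition (WI 3). -/
def WI3 (m n : ℕ) (u v : List A) : Prop :=
  ∀ r r', uR m n r → uR m (n-1) r' →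
    ((endsX r ∧ endsY r') ∨ (endsY r ∧ endsX r')) →
    Defined u r → Defined v r → Defined u r' → Defined v r' →
    compare (pos u r) (pos u r') = compare (pos v r) (pos v r')

/-- Condition (WI 1c). -/
def WI1c (m n : ℕ) (u v : List A) : Prop := AgreeCond (uR m n) u v

/-- Condition (WI 2c). -/
def WI2c (m n : ℕ) (u v : List A) : Prop :=
  ∀ r r', uR m n r → uR (m-1) (n-1) r' →
    Condensed u r → Condensed v r → Condensed u r' → Condensed v r' →
    compare (pos u r) (pos u r') = compare (pos v r) (pos v r')

/-- Condition (WI 3c). -/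
def WI3c (m n : ℕ) (u v : List A) : Prop :=
  ∀ r r', uR m n r → uR m (n-1) r' →
    ((endsX r ∧ endsY r') ∨ (endsY r ∧ endsX r')) →
    Condensed u r → Condensed v r → Condensed u r' → Condensed v r' →
    compare (pos u r) (pos u r') = compare (pos v r) (pos v r')


/-!
A ranker is condensed on `u` exactly when `u` can be factorized along it: every letter of the ranker
cuts the current factor at the first (for `X`) or last (for `Y`) occurrence, and reading continues
in the piece the next letter points into. In this form the relations `⊳` and `⊲` pass to factors of
`u` cut off by a prescribed letter, simply by prepending that letter to a ranker.

What remains for the prefix `w` before the first `a` of `u` are the rankers `X_b r` with a full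
budget of blocks. The ranker `X_b Y_a` tells whether the first `b` lies in `w`. If it does and `r`
turns to the left at once, the first `b` cuts the same left piece off `w` and off `u`. If `r` starts
with an `X`-letter, the argument is repeated to the right of the first `b`, where `a` is still first
met at the end of `w`. The suffix after the first `a` is treated in the same way from the right end,
with `Y_b Y_a` as the test ranker. Reversal of words exchanges the two kinds of factorizations.
-/

section Factorizations

variable {α : Type*} {a b : α} {z : RLetter α} {u v w x y : List α}

/-- `u = w b v` is the `b`-left factorization of `u` (for the letter `X b`) or its `b`-right
factorization (for the letter `Y b`). -/
def IsFactorization : RLetter α → List α → List α → List α → Prop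
  | .X b, u, w, v => u = w ++ b :: v ∧ b ∉ w
  | .Y b, u, w, v => u = w ++ b :: v ∧ b ∉ v

theorem IsFactorization.exists_eq_append_cons (h : IsFactorization z u w v) :
    ∃ b, u = w ++ b :: v := by
  cases z <;> exact ⟨_, h.1⟩

theorem exists_isFactorization_X (h : b ∈ u) : ∃ w v, IsFactorization (.X b) u w v :=
  List.eq_append_cons_of_mem h

theorem exists_isFactorization_Y (h : b ∈ u) : ∃ w v, IsFactorization (.Y b) u w v := by
  obtain ⟨w, v, huwv, hb⟩ := List.eq_append_cons_of_mem (List.mem_reverse.2 h)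
  refine ⟨v.reverse, w.reverse, ?_, by simpa only [List.mem_reverse] using hb⟩
  simpa only [List.reverse_reverse, List.reverse_append, List.reverse_cons, List.append_assoc,
    List.singleton_append] using congrArg List.reverse huwv

theorem IsFactorization.unique (h : IsFactorization z u w v) (h' : IsFactorization z u x y) :
    w = x ∧ v = y := by
  cases z <;> obtain ⟨rfl, hb⟩ := h <;> obtain ⟨he, hb'⟩ := h' <;>
  · obtain ⟨s, rfl, hs⟩ | ⟨s, rfl, hs⟩ := List.append_eq_append_iff.1 he <;>
      cases s <;> simp_all

theorem IsFactorization.notMem_prefix_iff (ha : IsFactorization (.X a) u w v)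
    (hb : IsFactorization (.X b) u x y) (hne : b ≠ a) :
    a ∉ x ↔ ∃ s, IsFactorization (.X b) w x s ∧ IsFactorization (.X a) y s v := by
  obtain ⟨rfl, haw⟩ := ha
  obtain ⟨he, hbx⟩ := hb
  constructor
  · intro hax
    obtain ⟨s, rfl, hs⟩ | ⟨s, rfl, hs⟩ := List.append_eq_append_iff.1 he <;>
      cases s <;> simp_all [IsFactorization]
  · rintro ⟨s, ⟨rfl, -⟩, -⟩ hax
    exact haw (List.mem_append_left _ hax)

theorem IsFactorization.mem_prefix_iff (ha : IsFactorization (.X a) u w v)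
    (hb : IsFactorization (.Y b) u x y) :
    a ∈ x ↔ ∃ s, IsFactorization (.Y b) v s y ∧ IsFactorization (.X a) x w s := by
  obtain ⟨rfl, haw⟩ := ha
  obtain ⟨he, hby⟩ := hb
  constructor
  · intro hax
    obtain ⟨s, rfl, hs⟩ | ⟨s, rfl, hs⟩ := List.append_eq_append_iff.1 he <;>
      cases s <;> simp_all [IsFactorization]
  · rintro ⟨s, -, rfl, -⟩
    simp

theorem IsFactorization.trans_prefix (ha : IsFactorization (.X a) u w v)
    (hb : IsFactorization (.X b) w x y) :
    b ≠ a ∧ ∃ s, IsFactorization (.X b) u x s ∧ IsFactorization (.X a) s y v := by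
  obtain ⟨rfl, haw⟩ := ha
  obtain ⟨rfl, hbx⟩ := hb
  simp only [List.mem_append, List.mem_cons, not_or] at haw
  exact ⟨Ne.symm haw.2.1, y ++ a :: v, ⟨by simp, hbx⟩, rfl, haw.2.2⟩

theorem IsFactorization.trans_suffix (ha : IsFactorization (.X a) u w v)
    (hb : IsFactorization (.Y b) v x y) :
    ∃ s, IsFactorization (.Y b) u s y ∧ IsFactorization (.X a) s w x := by
  obtain ⟨rfl, haw⟩ := ha
  obtain ⟨rfl, hby⟩ := hb
  exact ⟨w ++ a :: x, ⟨by simp, hby⟩, rfl, haw⟩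

end Factorizations

section RecCondensed

variable {α : Type*} {a b : α} {z : RLetter α} {r : List (RLetter α)} {m n : ℕ}
  {u v w w' x x' s t : List α}

/-- The factor on which a ranker that has just read the middle letter of `w b v` goes on with `r`:
the right one if `r` starts with an `X`-letter, the left one if `r` starts with a `Y`-letter. The
value for `r = []` is irrelevant; `[]` makes the definition compatible with reversal. -/
def continuation : List (RLetter α) → List α → List α → List α
  | [], _, _ => []
  | .X _ :: _, _, v => v
  | .Y _ :: _, w, _ => w

/-- Condensed rankers described by iterated factorization: each letter of the ranker cuts the
current factor of `u`, and the ranker continues inside one of the two pieces. -/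
def RecCondensed : List (RLetter α) → List α → Prop
  | [], _ => True
  | z :: r, u => ∃ w v, IsFactorization z u w v ∧ RecCondensed r (continuation r w v)

theorem IsFactorization.recCondensed_cons_iff (h : IsFactorization z u w v) :
    RecCondensed (z :: r) u ↔ RecCondensed r (continuation r w v) := by
  refine ⟨fun ⟨w', v', h', hr⟩ => ?_, fun hr => ⟨w, v, h, hr⟩⟩
  obtain ⟨rfl, rfl⟩ := h.unique h'
  exact hr

theorem IsFactorization.recCondensed_singleton (h : IsFactorization z u w v) :
    RecCondensed [z] u :=
  h.recCondensed_cons_iff.2 trivial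

theorem recCondensed_Y_singleton_iff : RecCondensed [.Y a] u ↔ a ∈ u := by
  constructor
  · rintro ⟨w, v, ⟨rfl, -⟩, -⟩
    simp
  · intro ha
    obtain ⟨w, v, h⟩ := exists_isFactorization_Y ha
    exact h.recCondensed_singleton

theorem IsFactorization.recCondensed_cons_Y_iff (h : IsFactorization z u w v) :
    RecCondensed [z, .Y a] u ↔ a ∈ w :=
  h.recCondensed_cons_iff.trans recCondensed_Y_singleton_iff

/-- Agreement of `u` and `v` on the condensed rankers with at most `m` blocks and depth at most `n`
that satisfy `P`. The cases `P = startsX` and `P = startsY` are the leading parts of `u ⊳_{m,n} v`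
and `u ⊲_{m,n} v`. -/
def AgreeOn (P : List (RLetter α) → Prop) (m n : ℕ) (u v : List α) : Prop :=
  ∀ r, P r → numBlocks r ≤ m → r.length ≤ n → (RecCondensed r u ↔ RecCondensed r v)

theorem AgreeOn.symm {P : List (RLetter α) → Prop} (h : AgreeOn P m n u v) : AgreeOn P m n v u :=
  fun r hP hm hn => (h r hP hm hn).symm

theorem AgreeOn.of_X_factorization (h : AgreeOn startsX m (n + 1) u v)
    (hu : IsFactorization (.X b) u w x) (hv : IsFactorization (.X b) v w' x') :
    AgreeOn startsX m n x x' := by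
  rintro _ ⟨c, r, rfl⟩ hm hn
  have hbr := h (.X b :: .X c :: r) ⟨b, _, rfl⟩ (by simpa [numBlocks, sameDir] using hm)
    (Nat.succ_le_succ hn)
  rwa [hu.recCondensed_cons_iff, hv.recCondensed_cons_iff] at hbr

theorem AgreeOn.of_Y_factorization (h : AgreeOn startsY m (n + 1) u v)
    (hu : IsFactorization (.Y b) u w x) (hv : IsFactorization (.Y b) v w' x') :
    AgreeOn startsY m n w w' := by
  rintro _ ⟨c, r, rfl⟩ hm hn
  have hbr := h (.Y b :: .Y c :: r) ⟨b, _, rfl⟩ (by simpa [numBlocks, sameDir] using hm)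
    (Nat.succ_le_succ hn)
  rwa [hu.recCondensed_cons_iff, hv.recCondensed_cons_iff] at hbr

theorem one_le_numBlocks_cons (z : RLetter α) (r : List (RLetter α)) :
    1 ≤ numBlocks (z :: r) := by
  induction r generalizing z with
  | nil => exact le_rfl
  | cons w r ih => exact (ih w).trans (Nat.le_add_left _ _)

/-- Since `b` is read before the first `a` of `u`, the ranker `X_b Y_a` is not condensed on `u`.
Hence it is not condensed on `v`, which forces the first `b` of `v` before the first `a`. -/
theorem AgreeOn.exists_X_factorization_prefix (hm : 2 ≤ m) (hn : 2 ≤ n)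
    (h : AgreeOn startsX m n u v) (hu : IsFactorization (.X a) u w x)
    (hv : IsFactorization (.X a) v w' x') (hw : IsFactorization (.X b) w s t) :
    ∃ y s' t' y', IsFactorization (.X b) u s y ∧ IsFactorization (.X a) y t x ∧
      IsFactorization (.X b) v s' y' ∧ IsFactorization (.X b) w' s' t' ∧
      IsFactorization (.X a) y' t' x' := by
  obtain ⟨hne, y, huy, hyt⟩ := hu.trans_prefix hw
  obtain ⟨s', y', hvy, -⟩ := (h [.X b] ⟨b, _, rfl⟩ (one_le_two.trans hm)
    (one_le_two.trans hn)).1 huy.recCondensed_singleton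
  have has : a ∉ s := (hu.notMem_prefix_iff huy hne).2 ⟨t, hw, hyt⟩
  have has' : a ∉ s' := by
    rwa [← hvy.recCondensed_cons_Y_iff, ← h [.X b, .Y a] ⟨b, _, rfl⟩ hm hn,
      huy.recCondensed_cons_Y_iff]
  obtain ⟨t', hw', hyt'⟩ := (hv.notMem_prefix_iff hvy hne).1 has'
  exact ⟨y, s', t', y', huy, hyt, hvy, hw', hyt'⟩

/-- Since `b` is read after the first `a` of `u`, the ranker `Y_b Y_a` is condensed on `u`.
Hence it is condensed on `v`, which forces the last `b` of `v` after the first `a`. -/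
theorem AgreeOn.exists_Y_factorization_suffix (hm : 1 ≤ m) (hn : 2 ≤ n)
    (h : AgreeOn startsY m n u v) (hu : IsFactorization (.X a) u x w)
    (hv : IsFactorization (.X a) v x' w') (hw : IsFactorization (.Y b) w s t) :
    ∃ y s' t' y', IsFactorization (.Y b) u y t ∧ IsFactorization (.X a) y x s ∧
      IsFactorization (.Y b) v y' t' ∧ IsFactorization (.Y b) w' s' t' ∧
      IsFactorization (.X a) y' x' s' := by
  obtain ⟨y, huy, hys⟩ := hu.trans_suffix hw
  obtain ⟨y', t', hvy, -⟩ := (h [.Y b] ⟨b, _, rfl⟩ hm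
    (one_le_two.trans hn)).1 huy.recCondensed_singleton
  have hay : a ∈ y := (hu.mem_prefix_iff huy).2 ⟨s, hw, hys⟩
  have hay' : a ∈ y' := by
    rwa [← hvy.recCondensed_cons_Y_iff, ← h [.Y b, .Y a] ⟨b, _, rfl⟩ hm hn,
      huy.recCondensed_cons_Y_iff]
  obtain ⟨s', hw', hys'⟩ := (hv.mem_prefix_iff hvy).1 hay'
  exact ⟨y, s', t', y', huy, hys, hvy, hw', hys'⟩

theorem AgreeOn.recCondensed_prefix (hm : 2 ≤ m) (h : AgreeOn startsX m (n + 1) u v)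
    (hu : IsFactorization (.X a) u w x) (hv : IsFactorization (.X a) v w' x')
    (hrm : numBlocks (.X b :: r) ≤ m) (hrn : (RLetter.X b :: r).length ≤ n)
    (hr : RecCondensed (.X b :: r) w) : RecCondensed (.X b :: r) w' := by
  induction r generalizing n u v w w' b with
  | nil =>
    obtain ⟨s, t, hw, -⟩ := hr
    obtain ⟨_, _, _, _, -, -, -, hw', -⟩ :=
      h.exists_X_factorization_prefix hm (Nat.succ_le_succ hrn) hu hv hw
    exact hw'.recCondensed_singleton
  | cons z r ih =>
    obtain ⟨s, t, hw, hr⟩ := hr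
    have hn : 2 ≤ n + 1 := Nat.succ_le_succ (le_trans (by simp) hrn)
    obtain ⟨y, s', t', y', huy, hyt, hvy, hw', hyt'⟩ :=
      h.exists_X_factorization_prefix hm hn hu hv hw
    rw [hw'.recCondensed_cons_iff]
    cases z with
    | X c =>
      obtain ⟨n, rfl⟩ := Nat.exists_eq_add_of_le' (Nat.one_le_of_lt hrn)
      exact ih (h.of_X_factorization huy hvy) hyt hyt'
        (by simpa [numBlocks, sameDir] using hrm) (Nat.le_of_succ_le_succ hrn) hr
    | Y c =>
      have hbr := h (.X b :: .Y c :: r) ⟨b, _, rfl⟩ hrm (hrn.trans n.le_succ)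
      rw [huy.recCondensed_cons_iff, hvy.recCondensed_cons_iff] at hbr
      exact hbr.1 hr

theorem AgreeOn.recCondensed_suffix (h : AgreeOn startsY m (n + 1) u v)
    (hu : IsFactorization (.X a) u x w) (hv : IsFactorization (.X a) v x' w')
    (hrm : numBlocks (.Y b :: r) ≤ m) (hrn : (RLetter.Y b :: r).length ≤ n)
    (hr : RecCondensed (.Y b :: r) w) : RecCondensed (.Y b :: r) w' := by
  have hm : 1 ≤ m := (one_le_numBlocks_cons _ _).trans hrm
  induction r generalizing n u v w w' b with
  | nil =>
    obtain ⟨s, t, hw, -⟩ := hr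
    obtain ⟨_, _, _, _, -, -, -, hw', -⟩ :=
      h.exists_Y_factorization_suffix hm (Nat.succ_le_succ hrn) hu hv hw
    exact hw'.recCondensed_singleton
  | cons z r ih =>
    obtain ⟨s, t, hw, hr⟩ := hr
    have hn : 2 ≤ n + 1 := Nat.succ_le_succ (le_trans (by simp) hrn)
    obtain ⟨y, s', t', y', huy, hys, hvy, hw', hys'⟩ :=
      h.exists_Y_factorization_suffix hm hn hu hv hw
    rw [hw'.recCondensed_cons_iff]
    cases z with
    | X c =>
      have hbr := h (.Y b :: .X c :: r) ⟨b, _, rfl⟩ hrm (hrn.trans n.le_succ)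
      rw [huy.recCondensed_cons_iff, hvy.recCondensed_cons_iff] at hbr
      exact hbr.1 hr
    | Y c =>
      obtain ⟨n, rfl⟩ := Nat.exists_eq_add_of_le' (Nat.one_le_of_lt hrn)
      exact ih (h.of_Y_factorization huy hvy) hys hys'
        (by simpa [numBlocks, sameDir] using hrm) (Nat.le_of_succ_le_succ hrn) hr

theorem AgreeOn.prefix_of_X_factorization (hm : 2 ≤ m) (h : AgreeOn startsX m (n + 1) u v)
    (hu : IsFactorization (.X a) u w x) (hv : IsFactorization (.X a) v w' x') :
    AgreeOn startsX m n w w' := by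
  rintro _ ⟨b, r, rfl⟩ hrm hrn
  exact ⟨h.recCondensed_prefix hm hu hv hrm hrn, h.symm.recCondensed_prefix hm hv hu hrm hrn⟩

theorem AgreeOn.suffix_of_X_factorization (h : AgreeOn startsY m (n + 1) u v)
    (hu : IsFactorization (.X a) u x w) (hv : IsFactorization (.X a) v x' w') :
    AgreeOn startsY m n w w' := by
  rintro _ ⟨b, r, rfl⟩ hrm hrn
  exact ⟨h.recCondensed_suffix hu hv hrm hrn, h.symm.recCondensed_suffix hv hu hrm hrn⟩

end RecCondensed

section RankerSets

variable {α : Type*} {r : List (RLetter α)} {m n : ℕ}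

theorem uRX_iff : uRX m n r ↔
    (startsX r ∧ numBlocks r ≤ m ∧ r.length ≤ n) ∨
      (startsY r ∧ numBlocks r < m ∧ r.length < n) := by
  grind [uRX, RX, RY]

theorem uRY_iff : uRY m n r ↔
    (startsY r ∧ numBlocks r ≤ m ∧ r.length ≤ n) ∨
      (startsX r ∧ numBlocks r < m ∧ r.length < n) := by
  grind [uRY, RX, RY]

theorem uRX.ne_nil (h : uRX m n r) : r ≠ [] := by
  rintro rfl
  simp [uRX, RX, RY, startsX, startsY] at h

theorem uRY.ne_nil (h : uRY m n r) : r ≠ [] := by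
  rintro rfl
  simp [uRY, RX, RY, startsX, startsY] at h

end RankerSets

section Duality

variable {α : Type*} {z : RLetter α} {r : List (RLetter α)} {u v w : List α} {m n : ℕ}

/-- The letter with the opposite reading direction: reading `r` on `u` from left to right amounts to
reading `r.map RLetter.swap` on `u.reverse` from right to left. -/
def RLetter.swap : RLetter α → RLetter α
  | .X a => .Y a
  | .Y a => .X a

theorem RLetter.swap_involutive : Function.Involutive (RLetter.swap (α := α)) := by
  rintro (_ | _) <;> rfl

theorem map_swap_involutive : Function.Involutive (List.map (RLetter.swap (α := α))) := fun r => by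
  rw [List.map_map, RLetter.swap_involutive.comp_self, List.map_id]

theorem numBlocks_map_swap : ∀ r : List (RLetter α), numBlocks (r.map .swap) = numBlocks r
  | [] => rfl
  | [_] => rfl
  | z :: w :: r => by
    have ih := numBlocks_map_swap (w :: r)
    cases z <;> cases w <;> simpa [numBlocks, sameDir, RLetter.swap] using ih

theorem startsX_map_swap : startsX (r.map .swap) ↔ startsY r := by
  rcases r with _ | ⟨_ | _, _⟩ <;> simp [startsX, startsY, RLetter.swap]

theorem startsY_map_swap : startsY (r.map .swap) ↔ startsX r := by
  rcases r with _ | ⟨_ | _, _⟩ <;> simp [startsX, startsY, RLetter.swap]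

theorem uRX_map_swap : uRX m n (r.map .swap) ↔ uRY m n r := by
  simp only [uRX, uRY, RX, RY, numBlocks_map_swap, List.length_map, startsX_map_swap,
    startsY_map_swap]

theorem IsFactorization.reverse (h : IsFactorization z u w v) :
    IsFactorization z.swap u.reverse v.reverse w.reverse := by
  cases z <;> simpa [IsFactorization, RLetter.swap, List.reverse_eq_iff] using h

theorem continuation_map_swap (r : List (RLetter α)) (w v : List α) :
    continuation (r.map .swap) v.reverse w.reverse = (continuation r w v).reverse := by
  rcases r with _ | ⟨_ | _, _⟩ <;> rfl

theorem RecCondensed.reverse (h : RecCondensed r u) : RecCondensed (r.map .swap) u.reverse := by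
  induction r generalizing u with
  | nil => trivial
  | cons z r ih =>
    obtain ⟨w, v, hu, hr⟩ := h
    refine ⟨_, _, hu.reverse, ?_⟩
    rw [continuation_map_swap]
    exact ih hr

theorem recCondensed_map_swap_reverse :
    RecCondensed (r.map .swap) u.reverse ↔ RecCondensed r u :=
  ⟨fun h => by simpa only [map_swap_involutive r, List.reverse_reverse] using h.reverse,
    RecCondensed.reverse⟩

end Duality

section Occurrences

variable {a : A} {w v x y s : List A} {p : ℕ}

theorem nextOcc_append_cons (ha : a ∉ w) :
    nextOcc (x ++ (w ++ a :: v)) a x.length = some (x.length + w.length + 1) := by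
  rw [nextOcc, List.head?_filter, List.find?_range_eq_some]
  refine ⟨by simp [Nat.add_assoc], by simp, fun q hq => ?_⟩
  simp only [Bool.not_eq_true', decide_eq_false_iff_not]
  rintro ⟨hxq, hqa⟩
  rw [List.getElem?_append_right (by omega), List.getElem?_append_left (by omega)] at hqa
  exact ha (List.mem_of_getElem? hqa)

theorem nextOcc_append_eq_some_iff :
    nextOcc (x ++ s) a x.length = some p ↔
      ∃ w v, IsFactorization (.X a) s w v ∧ p = x.length + w.length + 1 := by
  constructor
  · intro hp
    have ha : a ∈ s := by
      have hmem := List.mem_of_head? hp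
      simp only [List.mem_filter, decide_eq_true_eq] at hmem
      obtain ⟨-, hxp, hpa⟩ := hmem
      rw [List.getElem?_append_right (by omega)] at hpa
      exact List.mem_of_getElem? hpa
    obtain ⟨w, v, rfl, haw⟩ := exists_isFactorization_X ha
    rw [nextOcc_append_cons haw, Option.some_inj] at hp
    exact ⟨w, v, ⟨rfl, haw⟩, hp.symm⟩
  · rintro ⟨w, v, ⟨rfl, haw⟩, rfl⟩
    exact nextOcc_append_cons haw

theorem getLast?_filter_range_eq_some {N p : ℕ} {P : ℕ → Bool} (hpN : p < N) (hp : P p)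
    (hP : ∀ q, p < q → q < N → ¬ P q) : ((List.range N).filter P).getLast? = some p := by
  obtain ⟨k, rfl⟩ := Nat.exists_eq_add_of_le hpN
  have htail : ((List.range k).map (p.succ + ·)).filter P = [] := by
    simp only [List.filter_eq_nil_iff, List.mem_map, List.mem_range]
    rintro _ ⟨q, hq, rfl⟩
    exact hP _ (by omega) (by omega)
  rw [List.range_add, List.filter_append, htail, List.range_succ, List.filter_append]
  simp [hp]

theorem prevOcc_append_cons (ha : a ∉ v) :
    prevOcc (w ++ a :: v ++ y) a ((w ++ a :: v).length + 1) = some (w.length + 1) := by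
  apply getLast?_filter_range_eq_some
  · simp
  · simp
  · simp only [decide_eq_true_eq]
    rintro q hwq - ⟨-, hq, hqa⟩
    rw [List.getElem?_append_left (by omega), List.getElem?_append_right (by omega),
      List.getElem?_cons, if_neg (by omega)] at hqa
    exact ha (List.mem_of_getElem? hqa)

theorem prevOcc_append_eq_some_iff :
    prevOcc (s ++ y) a (s.length + 1) = some p ↔
      ∃ w v, IsFactorization (.Y a) s w v ∧ p = w.length + 1 := by
  constructor
  · intro hp
    have ha : a ∈ s := by
      have hmem := List.mem_of_getLast? hp
      simp only [List.mem_filter, decide_eq_true_eq] at hmem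
      obtain ⟨-, hp1, hps, hpa⟩ := hmem
      rw [List.getElem?_append_left (by omega)] at hpa
      exact List.mem_of_getElem? hpa
    obtain ⟨w, v, rfl, hav⟩ := exists_isFactorization_Y ha
    rw [prevOcc_append_cons hav, Option.some_inj] at hp
    exact ⟨w, v, ⟨rfl, hav⟩, hp.symm⟩
  · rintro ⟨w, v, ⟨rfl, hav⟩, rfl⟩
    exact prevOcc_append_cons hav

end Occurrences

section Condensed

variable {b : A} {z z' : RLetter A} {t : List (RLetter A)} {u x y : List A} {i j i' j' p : ℕ}

/-- The endpoint of the interval `(i;j)` from which the letter `z` reads. -/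
def readingEnd : RLetter A → ℕ → ℕ → ℕ
  | .X _, i, _ => i
  | .Y _, _, j => j

/-- Reading `z` inside the open interval `(i;j)` yields the position `p` of that interval. -/
def ReadsAt (u : List A) (z : RLetter A) (i j p : ℕ) : Prop :=
  stepR u z (readingEnd z i j) = some p ∧ i < p ∧ p < j

/-- The condition on two consecutive intervals `(i;j) ⊃ (i';j')` in the definition of `Condensed`
imposed by two consecutive letters `z z'`. -/
def ChainStep (u : List A) (z z' : RLetter A) (i j i' j' : ℕ) : Prop :=
  (match z' with
    | .X _ => stepR u z (readingEnd z i j) = some i' ∧ j' = j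
    | .Y _ => i' = i ∧ stepR u z (readingEnd z i j) = some j') ∧
  i ≤ i' ∧ j' ≤ j ∧ (i < i' ∨ j' < j)

/-- The ranker `z :: t` is condensed on `u` with `(i₀;j₀)` instead of `(0;|u|+1)` as the outermost
interval of the chain. -/
def CondensedFrom (u : List A) (z : RLetter A) (t : List (RLetter A)) (i₀ j₀ : ℕ) : Prop :=
  ∃ (p : ℕ) (i j : ℕ → ℕ),
    evalFrom u (z :: t) (readingEnd z i₀ j₀) = some p ∧ i 0 = i₀ ∧ j 0 = j₀ ∧
    (∀ ℓ z₁ z₂, (z :: t)[ℓ]? = some z₁ → (z :: t)[ℓ + 1]? = some z₂ →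
      ChainStep u z₁ z₂ (i ℓ) (j ℓ) (i (ℓ + 1)) (j (ℓ + 1))) ∧
    i t.length < p ∧ p < j t.length

theorem condensed_cons_iff :
    Condensed u (z :: t) ↔ CondensedFrom u z t 0 (u.length + 1) := by
  have heval : evalFrom u (z :: t) (readingEnd z 0 (u.length + 1)) = evalR u (z :: t) := by
    cases z <;> rfl
  constructor
  · rintro ⟨p, i, j, hp, hi, hj, hXX, hYY, hXY, hYX, hnest, hip, hpj⟩
    refine ⟨p, i, j, heval.trans hp, hi, hj, fun ℓ z₁ z₂ h₁ h₂ => ⟨?_, ?_⟩, hip, hpj⟩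
    · cases z₁ <;> cases z₂
      · exact hXX (ℓ + 1) _ _ ℓ.succ_pos h₁ h₂
      · exact hXY (ℓ + 1) _ _ ℓ.succ_pos h₁ h₂
      · exact hYX (ℓ + 1) _ _ ℓ.succ_pos h₁ h₂
      · exact hYY (ℓ + 1) _ _ ℓ.succ_pos h₁ h₂
    · exact hnest (ℓ + 1) ℓ.succ_pos (List.getElem?_eq_some_iff.1 h₂).1
  · rintro ⟨p, i, j, hp, hi, hj, hstep, hip, hpj⟩
    have hpair (ℓ : ℕ) (z₁ z₂ : RLetter A) (hℓ : 1 ≤ ℓ) (h₁ : (z :: t)[ℓ - 1]? = some z₁)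
        (h₂ : (z :: t)[ℓ]? = some z₂) :
        ChainStep u z₁ z₂ (i (ℓ - 1)) (j (ℓ - 1)) (i ℓ) (j ℓ) := by
      obtain ⟨ℓ, rfl⟩ := Nat.exists_eq_add_of_le' hℓ
      exact hstep ℓ z₁ z₂ h₁ h₂
    refine ⟨p, i, j, heval.symm.trans hp, hi, hj,
      fun ℓ _ _ hℓ h₁ h₂ => (hpair ℓ _ _ hℓ h₁ h₂).1,
      fun ℓ _ _ hℓ h₁ h₂ => (hpair ℓ _ _ hℓ h₁ h₂).1,
      fun ℓ _ _ hℓ h₁ h₂ => (hpair ℓ _ _ hℓ h₁ h₂).1,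
      fun ℓ _ _ hℓ h₁ h₂ => (hpair ℓ _ _ hℓ h₁ h₂).1, fun ℓ hℓ hlt => ?_, hip, hpj⟩
    exact (hpair ℓ _ _ hℓ (List.getElem?_eq_getElem (by omega)) (List.getElem?_eq_getElem hlt)).2

theorem ChainStep.stepR_eq (h : ChainStep u z z' i j i' j') :
    stepR u z (readingEnd z i j) = some (readingEnd z' i' j') := by
  cases z'
  · exact h.1.1
  · exact h.1.2

theorem condensedFrom_nil_iff : CondensedFrom u z [] i j ↔ ∃ p, ReadsAt u z i j p := by
  have heval (q : ℕ) : evalFrom u [z] q = stepR u z q := Option.bind_fun_some _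
  constructor
  · rintro ⟨p, i, j, hp, rfl, rfl, -, hip, hpj⟩
    exact ⟨p, heval _ ▸ hp, hip, hpj⟩
  · rintro ⟨p, hp, hip, hpj⟩
    exact ⟨p, fun _ => i, fun _ => j, (heval _).trans hp, rfl, rfl, by simp, hip, hpj⟩

theorem condensedFrom_cons_iff : CondensedFrom u z (z' :: t) i j ↔
    ∃ i' j', ChainStep u z z' i j i' j' ∧ CondensedFrom u z' t i' j' := by
  have heval {i' j' : ℕ} (h : ChainStep u z z' i j i' j') :
      evalFrom u (z :: z' :: t) (readingEnd z i j) =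
        evalFrom u (z' :: t) (readingEnd z' i' j') := by
    rw [evalFrom, h.stepR_eq, Option.bind_some]
  constructor
  · rintro ⟨p, i, j, hp, rfl, rfl, hstep, hip, hpj⟩
    have hfirst := hstep 0 z z' rfl rfl
    exact ⟨i 1, j 1, hfirst, p, fun ℓ => i (ℓ + 1), fun ℓ => j (ℓ + 1), heval hfirst ▸ hp, rfl, rfl,
      fun ℓ => hstep (ℓ + 1), hip, hpj⟩
  · rintro ⟨_, _, hfirst, p, i', j', hp, rfl, rfl, hstep, hip, hpj⟩
    refine ⟨p, fun ℓ => ℓ.casesOn i i', fun ℓ => ℓ.casesOn j j', (heval hfirst).trans hp, rfl, rfl,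
      ?_, hip, hpj⟩
    rintro (_ | ℓ) z₁ z₂ h₁ h₂
    · cases h₁
      cases h₂
      exact hfirst
    · exact hstep ℓ z₁ z₂ h₁ h₂

theorem CondensedFrom.lt (h : CondensedFrom u z t i j) : i < j := by
  induction t generalizing z i j with
  | nil =>
    obtain ⟨p, -, hip, hpj⟩ := condensedFrom_nil_iff.1 h
    exact hip.trans hpj
  | cons z' t ih =>
    obtain ⟨i', j', ⟨-, hi, hj, -⟩, h'⟩ := condensedFrom_cons_iff.1 h
    exact (hi.trans_lt (ih h')).trans_le hj

theorem condensedFrom_cons_X_iff : CondensedFrom u z (.X b :: t) i j ↔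
    ∃ p, ReadsAt u z i j p ∧ CondensedFrom u (.X b) t p j := by
  rw [condensedFrom_cons_iff]
  constructor
  · rintro ⟨p, j, ⟨⟨hp, rfl⟩, -, -, hlt⟩, h⟩
    exact ⟨p, ⟨hp, hlt.resolve_right (lt_irrefl _), h.lt⟩, h⟩
  · rintro ⟨p, ⟨hp, hip, -⟩, h⟩
    exact ⟨p, j, ⟨⟨hp, rfl⟩, hip.le, le_rfl, .inl hip⟩, h⟩

theorem condensedFrom_cons_Y_iff : CondensedFrom u z (.Y b :: t) i j ↔
    ∃ p, ReadsAt u z i j p ∧ CondensedFrom u (.Y b) t i p := by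
  rw [condensedFrom_cons_iff]
  constructor
  · rintro ⟨i, p, ⟨⟨rfl, hp⟩, -, -, hlt⟩, h⟩
    exact ⟨p, ⟨hp, h.lt, hlt.resolve_left (lt_irrefl _)⟩, h⟩
  · rintro ⟨p, ⟨hp, -, hpj⟩, h⟩
    exact ⟨i, p, ⟨⟨rfl, hp⟩, le_rfl, hpj.le, .inr hpj⟩, h⟩

theorem readsAt_factor_iff :
    ReadsAt (x ++ u ++ y) z x.length (x.length + u.length + 1) p ↔
      ∃ w v, IsFactorization z u w v ∧ p = x.length + w.length + 1 := by
  cases z with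
  | X a =>
    simp only [ReadsAt, readingEnd, stepR, List.append_assoc, nextOcc_append_eq_some_iff]
    constructor
    · rintro ⟨⟨w, v, ⟨huy, haw⟩, rfl⟩, -, hwu⟩
      have hprefix : w ++ [a] <+: u :=
        List.prefix_of_prefix_length_le ⟨v, by simp [huy]⟩ (List.prefix_append u y) (by simp; omega)
      obtain ⟨s, rfl⟩ := hprefix
      exact ⟨w, s, ⟨by simp, haw⟩, rfl⟩
    · rintro ⟨w, v, ⟨rfl, haw⟩, rfl⟩
      exact ⟨⟨w, v ++ y, ⟨by simp, haw⟩, rfl⟩, by omega, by simp⟩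
  | Y a =>
    rw [ReadsAt, readingEnd, stepR, ← List.length_append, prevOcc_append_eq_some_iff]
    constructor
    · rintro ⟨⟨w, v, ⟨hxu, hav⟩, rfl⟩, hxw, -⟩
      have hprefix : x <+: w :=
        List.prefix_of_prefix_length_le ⟨u, hxu⟩ (List.prefix_append w _) (by omega)
      obtain ⟨s, rfl⟩ := hprefix
      rw [List.append_assoc, List.append_cancel_left_eq] at hxu
      exact ⟨s, v, ⟨hxu, hav⟩, by rw [List.length_append]⟩
    · rintro ⟨w, v, ⟨rfl, hav⟩, rfl⟩
      exact ⟨⟨x ++ w, v, ⟨by simp, hav⟩, by simp⟩, by omega, by simp⟩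

theorem condensedFrom_factor_iff :
    CondensedFrom (x ++ u ++ y) z t x.length (x.length + u.length + 1) ↔
      RecCondensed (z :: t) u := by
  induction t generalizing x u y z with
  | nil => simp only [condensedFrom_nil_iff, readsAt_factor_iff, RecCondensed, and_true]; grind
  | cons z' t ih =>
    rw [RecCondensed]
    cases z' with
    | X b =>
      have hright {w v : List A} (h : IsFactorization z u w v) :
          CondensedFrom (x ++ u ++ y) (.X b) t (x.length + w.length + 1)
            (x.length + u.length + 1) ↔ RecCondensed (.X b :: t) v := by
        obtain ⟨c, rfl⟩ := h.exists_eq_append_cons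
        simpa [Nat.add_assoc, Nat.add_comm 1] using ih (x := x ++ w ++ [c]) (u := v) (y := y)
      simp only [condensedFrom_cons_X_iff, readsAt_factor_iff]
      exact ⟨fun ⟨_, ⟨w, v, h, hp⟩, hr⟩ => ⟨w, v, h, (hright h).1 (hp ▸ hr)⟩,
        fun ⟨w, v, h, hr⟩ => ⟨_, ⟨w, v, h, rfl⟩, (hright h).2 hr⟩⟩
    | Y b =>
      have hleft {w v : List A} (h : IsFactorization z u w v) :
          CondensedFrom (x ++ u ++ y) (.Y b) t x.length (x.length + w.length + 1) ↔
            RecCondensed (.Y b :: t) w := by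
        obtain ⟨c, rfl⟩ := h.exists_eq_append_cons
        simpa using ih (x := x) (u := w) (y := c :: v ++ y)
      simp only [condensedFrom_cons_Y_iff, readsAt_factor_iff]
      exact ⟨fun ⟨_, ⟨w, v, h, hp⟩, hr⟩ => ⟨w, v, h, (hleft h).1 (hp ▸ hr)⟩,
        fun ⟨w, v, h, hr⟩ => ⟨_, ⟨w, v, h, rfl⟩, (hleft h).2 hr⟩⟩

theorem condensed_iff_recCondensed {r : List (RLetter A)} (hr : r ≠ []) :
    Condensed u r ↔ RecCondensed r u := by
  obtain ⟨z, t, rfl⟩ := List.exists_cons_of_ne_nil hr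
  rw [condensed_cons_iff]
  simpa using condensedFrom_factor_iff (x := []) (y := []) (u := u) (z := z) (t := t)

end Condensed

section Agreement

variable {a : A} {m n : ℕ} {u v w w' x x' : List A}

theorem trir_iff :
    trir m n u v ↔ ∀ r, uRX m n r → (RecCondensed r u ↔ RecCondensed r v) :=
  forall₂_congr fun _ hr => by
    rw [condensed_iff_recCondensed hr.ne_nil, condensed_iff_recCondensed hr.ne_nil]

theorem tril_iff :
    tril m n u v ↔ ∀ r, uRY m n r → (RecCondensed r u ↔ RecCondensed r v) :=
  forall₂_congr fun _ hr => by
    rw [condensed_iff_recCondensed hr.ne_nil, condensed_iff_recCondensed hr.ne_nil]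

theorem trir_reverse_iff : trir m n u.reverse v.reverse ↔ tril m n u v := by
  rw [trir_iff, tril_iff, map_swap_involutive.surjective.forall]
  simp only [uRX_map_swap, recCondensed_map_swap_reverse]

theorem tril_reverse_iff : tril m n u.reverse v.reverse ↔ trir m n u v := by
  rw [← trir_reverse_iff, List.reverse_reverse, List.reverse_reverse]

theorem trir.agreeOn (h : trir m n u v) : AgreeOn startsX m n u v :=
  fun r hr hm hn => trir_iff.1 h r (uRX_iff.2 (.inl ⟨hr, hm, hn⟩))

theorem tril.agreeOn (h : tril m n u v) : AgreeOn startsY m n u v :=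
  fun r hr hm hn => tril_iff.1 h r (uRY_iff.2 (.inl ⟨hr, hm, hn⟩))

theorem trir.mono_blocks {k : ℕ} (h : trir m n u v) (hk : k ≤ m) : trir k n u v :=
  fun r hr => h r <| by grind [uRX_iff]

theorem tril.mono_blocks {k : ℕ} (h : tril m n u v) (hk : k ≤ m) : tril k n u v :=
  fun r hr => h r <| by grind [uRY_iff]

theorem trir.prefix_of_left_factorization (hm : 2 ≤ m) (h : trir m (n + 1) u v)
    (hu : IsFactorization (.X a) u w x) (hv : IsFactorization (.X a) v w' x') :
    trir m n w w' := by
  rw [trir_iff]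
  intro r hr
  obtain ⟨hX, hrm, hrn⟩ | ⟨⟨b, t, rfl⟩, hrm, hrn⟩ := uRX_iff.1 hr
  · exact h.agreeOn.prefix_of_X_factorization hm hu hv r hX hrm hrn
  · have har := h.agreeOn (.X a :: .Y b :: t) ⟨a, _, rfl⟩
      (by simpa [numBlocks, sameDir, Nat.add_comm 1] using hrm) (by simpa using hrn.le)
    rwa [hu.recCondensed_cons_iff, hv.recCondensed_cons_iff] at har

theorem tril.suffix_of_left_factorization (h : tril m (n + 1) u v)
    (hu : IsFactorization (.X a) u x w) (hv : IsFactorization (.X a) v x' w') :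
    tril m n w w' := by
  rw [tril_iff]
  intro r hr
  obtain ⟨hY, hrm, hrn⟩ | ⟨⟨b, t, rfl⟩, hrm, hrn⟩ := uRY_iff.1 hr
  · exact h.agreeOn.suffix_of_X_factorization hu hv r hY hrm hrn
  · have har := tril_iff.1 h (.X a :: .X b :: t) <| uRY_iff.2 <|
      .inr ⟨⟨a, _, rfl⟩, by simpa [numBlocks, sameDir] using hrm, Nat.succ_lt_succ hrn⟩
    rwa [hu.recCondensed_cons_iff, hv.recCondensed_cons_iff] at har

theorem tril.suffix_of_right_factorization (hm : 2 ≤ m) (h : tril m (n + 1) u v)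
    (hu : IsFactorization (.Y a) u x w) (hv : IsFactorization (.Y a) v x' w') :
    tril m n w w' :=
  trir_reverse_iff.1 <|
    (trir_reverse_iff.2 h).prefix_of_left_factorization hm hu.reverse hv.reverse

theorem trir.prefix_of_right_factorization (h : trir m (n + 1) u v)
    (hu : IsFactorization (.Y a) u w x) (hv : IsFactorization (.Y a) v w' x') :
    trir m n w w' :=
  tril_reverse_iff.1 <| (tril_reverse_iff.2 h).suffix_of_left_factorization hu.reverse hv.reverse

end Agreement

/-- Behaviour of `⊳_{m,n}` and `⊲_{m,n}` under `a`-left and `a`-right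
factorizations. -/
theorem statement4 (m n : ℕ) (hm : 2 ≤ m) (hmn : m ≤ n) (u v : List A) (a : A)
    (ha : alph u = alph v) (hau : a ∈ alph u) :
    (∀ um up vm vp : List A,
       u = um ++ a :: up → a ∉ um → v = vm ++ a :: vp → a ∉ vm →
       ((trir m n u v → (trir m (n-1) um vm ∧ (n = m → trir (m-1) (n-1) um vm))) ∧
        (tril m n u v → (tril m (n-1) up vp ∧ (n = m → tril (m-1) (n-1) up vp))))) ∧
    (∀ um up vm vp : List A,
       u = um ++ a :: up → a ∉ up → v = vm ++ a :: vp → a ∉ vp →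
       ((tril m n u v → (tril m (n-1) up vp ∧ (n = m → tril (m-1) (n-1) up vp))) ∧
        (trir m n u v → (trir m (n-1) um vm ∧ (n = m → trir (m-1) (n-1) um vm))))) := by
  obtain ⟨n, rfl⟩ := Nat.exists_eq_add_of_le' (one_le_two.trans (hm.trans hmn))
  refine ⟨fun um up vm vp hu hum hv hvm => ?_, fun um up vm vp hu hup hv hvp => ?_⟩
  · have hua : IsFactorization (.X a) u um up := ⟨hu, hum⟩
    have hva : IsFactorization (.X a) v vm vp := ⟨hv, hvm⟩
    refine ⟨fun h => ?_, fun h => ?_⟩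
    · have hprefix := h.prefix_of_left_factorization hm hua hva
      exact ⟨hprefix, fun _ => hprefix.mono_blocks (m.sub_le 1)⟩
    · have hsuffix := h.suffix_of_left_factorization hua hva
      exact ⟨hsuffix, fun _ => hsuffix.mono_blocks (m.sub_le 1)⟩
  · have hua : IsFactorization (.Y a) u um up := ⟨hu, hup⟩
    have hva : IsFactorization (.Y a) v vm vp := ⟨hv, hvp⟩
    refine ⟨fun h => ?_, fun h => ?_⟩
    · have hsuffix := h.suffix_of_right_factorization hm hua hva
      exact ⟨hsuffix, fun _ => hsuffix.mono_blocks (m.sub_le 1)⟩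
    · have hprefix := h.prefix_of_right_factorization hua hva
      exact ⟨hprefix, fun _ => hprefix.mono_blocks (m.sub_le 1)⟩

end RankerPaper
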